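/- arXiv:2005.01150 — 2 statements merged into one kernel-verified Lean document; each statement's English description precedes it below -/
import Mathlib

section
/- Let T be a positive bounded linear operator on ℓ^p (1 ≤ p < ∞) with matrix a_{n,m} = (T e_m) n. Then T is a lattice homomorphism if and only if each row of the matrix has at most one non-zero entry, i.e., for every n and every pair i ≠ j, a_{n,i} = 0 or a_{n,j} = 0. -/
open scoped ENNReal

noncomputable section

/-- The `n`-th canonical unit vector of real `ℓᵖ`. -/
def e (p : ℝ≥0∞) (n : ℕ) : lp (fun _ : ℕ => ℝ) p := lp.single p n 1

/-- `T` is a lattice homomorphism: it sends coordinatewise suprema to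
coordinatewise suprema. -/
def IsLatticeHom (p : ℝ≥0∞) [Fact (1 ≤ p)]
    (T : lp (fun _ : ℕ => ℝ) p →L[ℝ] lp (fun _ : ℕ => ℝ) p) : Prop :=
  ∀ x y z : lp (fun _ : ℕ => ℝ) p,
    (∀ n, z n = max (x n) (y n)) → ∀ n, (T z) n = max ((T x) n) ((T y) n)

/-- `T` is a positive operator for the coordinatewise order. -/
def IsPositiveOp (p : ℝ≥0∞) [Fact (1 ≤ p)]
    (T : lp (fun _ : ℕ => ℝ) p →L[ℝ] lp (fun _ : ℕ => ℝ) p) : Prop :=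
  ∀ x : lp (fun _ : ℕ => ℝ) p, (∀ n, 0 ≤ x n) → ∀ n, 0 ≤ (T x) n

/-- `T` has a non-trivial closed invariant ideal. -/
def HasNontrivialClosedInvariantIdeal (p : ℝ≥0∞) [Fact (1 ≤ p)]
    (T : lp (fun _ : ℕ => ℝ) p →L[ℝ] lp (fun _ : ℕ => ℝ) p) : Prop :=
  ∃ I : Submodule ℝ (lp (fun _ : ℕ => ℝ) p),
    IsClosed (I : Set (lp (fun _ : ℕ => ℝ) p)) ∧ I ≠ ⊥ ∧ I ≠ ⊤ ∧
    (∀ x y : lp (fun _ : ℕ => ℝ) p, (∀ n, |x n| ≤ |y n|) → y ∈ I → x ∈ I) ∧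
    (∀ x ∈ I, T x ∈ I)

/-- The matrix of `T` is tridiagonal. -/
def IsTridiagonal (p : ℝ≥0∞) [Fact (1 ≤ p)]
    (T : lp (fun _ : ℕ => ℝ) p →L[ℝ] lp (fun _ : ℕ => ℝ) p) : Prop :=
  ∀ n m : ℕ, (m + 1 < n ∨ n + 1 < m) → (T (e p m)) n = 0

/-! Each coordinate of `T` is a continuous linear functional, so everything reduces to functionals
`φ`. A lattice functional sends disjoint vectors to disjoint numbers because `x + y = x ⊔ y` when
`x ⊓ y = 0`; applied to unit vectors this leaves at most one non-zero `φ (eᵢ)`. Conversely, since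
the unit vectors span a dense subspace for `p < ∞`, a functional with at most one non-zero
`φ (eᵢ)` is a multiple of one coordinate, and positivity makes the multiple non-negative.
-/

section Functional

variable {ι : Type*} {p : ℝ≥0∞}

/-- `φ` sends coordinatewise suprema in `ℓᵖ(ι)` to maxima, as a lattice homomorphism to `ℝ` does.
Linearity is not part of the predicate. -/
def IsLatticeFunctional (φ : lp (fun _ : ι => ℝ) p → ℝ) : Prop :=
  ∀ x y z : lp (fun _ : ι => ℝ) p, (∀ i, z i = max (x i) (y i)) → φ z = max (φ x) (φ y)

/-- `φ` is positive for the coordinatewise order on `ℓᵖ(ι)`. Linearity is not part of the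
predicate. -/
def IsPositiveFunctional (φ : lp (fun _ : ι => ℝ) p → ℝ) : Prop :=
  ∀ x : lp (fun _ : ι => ℝ) p, (∀ i, 0 ≤ x i) → 0 ≤ φ x

theorem IsLatticeFunctional.isPositiveFunctional {F : Type*}
    [FunLike F (lp (fun _ : ι => ℝ) p) ℝ] [ZeroHomClass F (lp (fun _ : ι => ℝ) p) ℝ] {φ : F}
    (hφ : IsLatticeFunctional φ) : IsPositiveFunctional φ := by
  intro x hx
  have h_eq : φ x = max (φ x) (φ 0) := hφ x 0 x fun i => (max_eq_left (hx i)).symm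
  rw [h_eq, map_zero]
  exact le_max_right _ _

theorem IsLatticeFunctional.min_map_eq_zero {F : Type*}
    [FunLike F (lp (fun _ : ι => ℝ) p) ℝ] [AddHomClass F (lp (fun _ : ι => ℝ) p) ℝ] {φ : F}
    (hφ : IsLatticeFunctional φ) {x y : lp (fun _ : ι => ℝ) p} (hxy : ∀ i, min (x i) (y i) = 0) :
    min (φ x) (φ y) = 0 := by
  have h_add_eq_sup : ∀ i, (x + y) i = max (x i) (y i) := fun i => by
    rw [lp.coeFn_add, Pi.add_apply, ← min_add_max, hxy, zero_add]
  have h_map : φ x + φ y = max (φ x) (φ y) := by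
    rw [← map_add]
    exact hφ x y (x + y) h_add_eq_sup
  rwa [← min_add_max, add_eq_right] at h_map

variable [DecidableEq ι]

theorem lp_single_one_nonneg (i k : ι) : 0 ≤ lp.single (E := fun _ : ι => ℝ) p i 1 k :=
  (Pi.single_nonneg (α := fun _ : ι => ℝ) (i := i)).2 zero_le_one k

theorem min_lp_single_one_eq_zero {i j : ι} (hij : i ≠ j) (k : ι) :
    min (lp.single (E := fun _ : ι => ℝ) p i 1 k) (lp.single (E := fun _ : ι => ℝ) p j 1 k) =
      0 := by
  rcases eq_or_ne k i with rfl | hki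
  · rw [lp.single_apply_ne p j _ hij, min_eq_right (lp_single_one_nonneg k k)]
  · rw [lp.single_apply_ne p i _ hki, min_eq_left (lp_single_one_nonneg j k)]

theorem continuousLinearMap_ext_lp_single_one {𝕜 F : Type*} [NormedRing 𝕜] [AddCommMonoid F]
    [Module 𝕜 F] [TopologicalSpace F] [T2Space F] [Fact (1 ≤ p)] (hp : p ≠ ∞)
    {φ ψ : lp (fun _ : ι => 𝕜) p →L[𝕜] F}
    (h : ∀ i, φ (lp.single p i 1) = ψ (lp.single p i 1)) : φ = ψ :=
  lp.ext_continuousLinearMap hp fun i => ContinuousLinearMap.ext_ring (h i)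

theorem map_eq_smul_map_lp_single_one {𝕜 F : Type*} [NormedRing 𝕜] [AddCommMonoid F] [Module 𝕜 F]
    [TopologicalSpace F] [T2Space F] [ContinuousSMul 𝕜 F] [Fact (1 ≤ p)] (hp : p ≠ ∞)
    {φ : lp (fun _ : ι => 𝕜) p →L[𝕜] F} {i : ι} (h : ∀ j, j ≠ i → φ (lp.single p j 1) = 0)
    (x : lp (fun _ : ι => 𝕜) p) : φ x = x i • φ (lp.single p i 1) := by
  suffices φ = (lp.evalCLM 𝕜 (fun _ : ι => 𝕜) p i).smulRight (φ (lp.single p i 1)) from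
    DFunLike.congr_fun this x
  refine continuousLinearMap_ext_lp_single_one hp fun j => ?_
  change φ (lp.single p j 1) = lp.single (E := fun _ : ι => 𝕜) p j 1 i • φ (lp.single p i 1)
  rcases eq_or_ne j i with rfl | hji
  · rw [lp.single_apply_self, one_smul]
  · rw [h j hji, lp.single_apply_ne p j _ hji.symm, zero_smul]

theorem IsPositiveFunctional.isLatticeFunctional [Fact (1 ≤ p)] (hp : p ≠ ∞)
    {φ : lp (fun _ : ι => ℝ) p →L[ℝ] ℝ} (hφ : IsPositiveFunctional φ)
    (h : ∀ i j, i ≠ j → φ (lp.single p i 1) = 0 ∨ φ (lp.single p j 1) = 0) :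
    IsLatticeFunctional φ := by
  intro x y z hz
  by_cases h_zero : ∀ i, φ (lp.single p i 1) = 0
  · obtain rfl : φ = 0 := continuousLinearMap_ext_lp_single_one hp h_zero
    exact (max_self 0).symm
  · obtain ⟨i, hi⟩ := not_forall.1 h_zero
    have h_coord := map_eq_smul_map_lp_single_one hp fun j hji => (h j i hji).resolve_right hi
    rw [h_coord x, h_coord y, h_coord z, hz]
    exact max_mul_of_nonneg _ _ (hφ _ (lp_single_one_nonneg i))

theorem isLatticeFunctional_iff [Fact (1 ≤ p)] (hp : p ≠ ∞) (φ : lp (fun _ : ι => ℝ) p →L[ℝ] ℝ) :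
    IsLatticeFunctional φ ↔ IsPositiveFunctional φ ∧
      ∀ i j, i ≠ j → φ (lp.single p i 1) = 0 ∨ φ (lp.single p j 1) = 0 := by
  refine ⟨fun hφ => ⟨hφ.isPositiveFunctional, fun i j hij => ?_⟩,
    fun ⟨hφ, h⟩ => hφ.isLatticeFunctional hp h⟩
  have h_min := hφ.min_map_eq_zero (min_lp_single_one_eq_zero hij)
  exact (min_choice _ _).imp (fun hi => hi.symm.trans h_min) fun hj => hj.symm.trans h_min

end Functional

theorem stmt_4_general {ι κ : Type*} [DecidableEq ι] {p q : ℝ≥0∞} [Fact (1 ≤ p)] [Fact (1 ≤ q)]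
    (hp : p ≠ ∞) (T : lp (fun _ : ι => ℝ) p →L[ℝ] lp (fun _ : κ => ℝ) q) :
    (∀ x y z : lp (fun _ : ι => ℝ) p,
        (∀ i, z i = max (x i) (y i)) → ∀ n, (T z) n = max ((T x) n) ((T y) n)) ↔
      (∀ x : lp (fun _ : ι => ℝ) p, (∀ i, 0 ≤ x i) → ∀ n, 0 ≤ (T x) n) ∧
        ∀ n i j, i ≠ j → (T (lp.single p i 1)) n = 0 ∨ (T (lp.single p j 1)) n = 0 := by
  have row_iff (n : κ) := isLatticeFunctional_iff hp ((lp.evalCLM ℝ (fun _ : κ => ℝ) q n).comp T)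
  constructor
  · intro hT
    have h_row n := (row_iff n).1 fun x y z hz => hT x y z hz n
    exact ⟨fun x hx n => (h_row n).1 x hx, fun n => (h_row n).2⟩
  · rintro ⟨hT, h⟩ x y z hz n
    exact (row_iff n).2 ⟨fun x hx => hT x hx n, h n⟩ x y z hz

/-- A positive operator on `ℓᵖ` (`1 ≤ p < ∞`) is a lattice homomorphism if and
only if each row of its matrix `a n m = (T eₘ) n` has at most one non-zero
entry. -/
theorem stmt_4 (p : ℝ≥0∞) [Fact (1 ≤ p)] (hp : p ≠ ∞)
    (T : lp (fun _ : ℕ => ℝ) p →L[ℝ] lp (fun _ : ℕ => ℝ) p)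
    (hTpos : IsPositiveOp p T) :
    IsLatticeHom p T ↔
      ∀ n i j : ℕ, i ≠ j → (T (e p i)) n = 0 ∨ (T (e p j)) n = 0 :=
  (stmt_4_general hp T).trans (and_iff_right hTpos)
end
end

section
/- Let T be a positive bounded linear operator on ℓ^p (1 ≤ p < ∞) whose matrix a_{n,m} = (T e_m) n is tridiagonal. Then T has no non-trivial closed invariant ideal if and only if both the sub-diagonal and the super-diagonal of the matrix have no null elements, i.e., a_{n+1,n} > 0 and a_{n,n+1} > 0 for every n ∈ ℕ. -/
open scoped ENNReal

noncomputable section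

/-!
For `p < ∞` the finitely supported sequences are dense in `ℓᵖ`, so a closed ideal is determined by
the unit vectors it contains: it consists of all vectors supported in some set `S` of indices. Such
an ideal is invariant under `T` iff `a_{n,m} = 0` whenever `m ∈ S` and `n ∉ S`. Hence `T` has no
non-trivial closed invariant ideal iff its matrix is irreducible, and a tridiagonal matrix on `ℕ`
with non-zero off-diagonal entries connects each index with its two neighbours, while a vanishing
entry linking `k` and `k + 1` makes `{0, …, k}` or `{k + 1, k + 2, …}` invariant.
-/

section Matrix

variable {ι M : Type*} [Zero M]

/-- A matrix, possibly infinite, is reducible if the span of some non-trivial set `S` of unit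
vectors is invariant. Columns index the source, so the entries from `S` to its complement vanish. -/
def IsReducibleMatrix (A : Matrix ι ι M) : Prop :=
  ∃ S : Set ι, S.Nonempty ∧ S ≠ Set.univ ∧ ∀ m ∈ S, ∀ n ∉ S, A n m = 0

/-- A matrix indexed by `ℕ` is tridiagonal if its entries vanish off the three central diagonals. -/
def IsTridiagonalMatrix (A : Matrix ℕ ℕ M) : Prop :=
  ∀ n m : ℕ, m + 1 < n ∨ n + 1 < m → A n m = 0

theorem IsTridiagonalMatrix.isReducibleMatrix_of_sub_eq_zero {A : Matrix ℕ ℕ M}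
    (hA : IsTridiagonalMatrix A) {k : ℕ} (hk : A (k + 1) k = 0) : IsReducibleMatrix A := by
  refine ⟨Set.Iic k, Set.nonempty_Iic, (Set.ne_univ_iff_exists_notMem _).2 ⟨k + 1, by simp⟩,
    fun m hm n hn => ?_⟩
  rw [Set.mem_Iic] at hm hn
  by_cases h : n = k + 1 ∧ m = k
  · rwa [h.1, h.2]
  · exact hA n m (by lia)

theorem IsTridiagonalMatrix.isReducibleMatrix_of_super_eq_zero {A : Matrix ℕ ℕ M}
    (hA : IsTridiagonalMatrix A) {k : ℕ} (hk : A k (k + 1) = 0) : IsReducibleMatrix A := by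
  refine ⟨Set.Ioi k, Set.nonempty_Ioi, (Set.ne_univ_iff_exists_notMem _).2 ⟨k, by simp⟩,
    fun m hm n hn => ?_⟩
  rw [Set.mem_Ioi] at hm hn
  by_cases h : n = k ∧ m = k + 1
  · rwa [h.1, h.2]
  · exact hA n m (by lia)

theorem not_isReducibleMatrix_of_offDiag_ne_zero {A : Matrix ℕ ℕ M}
    (hsub : ∀ n, A (n + 1) n ≠ 0) (hsuper : ∀ n, A n (n + 1) ≠ 0) : ¬ IsReducibleMatrix A := by
  rintro ⟨S, ⟨m, hm⟩, hS, hA⟩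
  have mem_iff_succ_mem (n : ℕ) : n ∈ S ↔ n + 1 ∈ S :=
    ⟨fun h => by_contra fun h' => hsub n (hA n h (n + 1) h'),
      fun h => by_contra fun h' => hsuper n (hA (n + 1) h n h')⟩
  have mem_iff_zero_mem (n : ℕ) : n ∈ S ↔ 0 ∈ S := by
    induction n with
    | zero => rfl
    | succ n ih => rw [← mem_iff_succ_mem, ih]
  exact hS (Set.eq_univ_of_forall fun n => (mem_iff_zero_mem n).2 ((mem_iff_zero_mem m).1 hm))

theorem IsTridiagonalMatrix.not_isReducibleMatrix_iff {A : Matrix ℕ ℕ M}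
    (hA : IsTridiagonalMatrix A) :
    ¬ IsReducibleMatrix A ↔ (∀ n, A (n + 1) n ≠ 0) ∧ ∀ n, A n (n + 1) ≠ 0 :=
  ⟨fun h => ⟨fun _ hn => h (hA.isReducibleMatrix_of_sub_eq_zero hn),
      fun _ hn => h (hA.isReducibleMatrix_of_super_eq_zero hn)⟩,
    fun h => not_isReducibleMatrix_of_offDiag_ne_zero h.1 h.2⟩

end Matrix

section ClosedIdeal

variable {ι 𝕜 : Type*} [NormedField 𝕜] {p : ℝ≥0∞}

/-- A subspace of `ℓᵖ` is solid (an order ideal) if it contains every vector dominated in absolute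
value by one of its elements. -/
def IsSolidSubspace (I : Submodule 𝕜 (lp (fun _ : ι => 𝕜) p)) : Prop :=
  ∀ x y : lp (fun _ : ι => 𝕜) p, (∀ i, ‖x i‖ ≤ ‖y i‖) → y ∈ I → x ∈ I

variable (𝕜 p) in
/-- The subspace of the vectors of `ℓᵖ` which vanish outside `S`. -/
def lpSupported (S : Set ι) : Submodule 𝕜 (lp (fun _ : ι => 𝕜) p) where
  carrier := {x | ∀ i ∉ S, x i = 0}
  zero_mem' _ _ := rfl
  add_mem' hx hy i hi := by simp [hx i hi, hy i hi]
  smul_mem' c x hx i hi := by simp [hx i hi]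

theorem isSolidSubspace_lpSupported (S : Set ι) : IsSolidSubspace (lpSupported 𝕜 p S) :=
  fun x y hxy hy i hi => norm_le_zero_iff.1 (by simpa [hy i hi] using hxy i)

theorem isClosed_lpSupported [Fact (1 ≤ p)] (S : Set ι) :
    IsClosed (lpSupported 𝕜 p S : Set (lp (fun _ : ι => 𝕜) p)) := by
  have eq_biInter_ker : (lpSupported 𝕜 p S : Set (lp (fun _ : ι => 𝕜) p)) =
      ⋂ i ∈ Sᶜ, {x | lp.evalCLM 𝕜 (fun _ : ι => 𝕜) p i x = 0} := by
    ext x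
    simp only [Set.mem_iInter]
    rfl
  rw [eq_biInter_ker]
  exact isClosed_biInter fun i _ => isClosed_eq (map_continuous _) continuous_const

theorem single_one_mem_lpSupported [DecidableEq ι] {S : Set ι} {i : ι} :
    lp.single p i 1 ∈ lpSupported 𝕜 p S ↔ i ∈ S := by
  refine ⟨fun h => by_contra fun hi => one_ne_zero (α := 𝕜) ?_, fun hi j hj => ?_⟩
  · simpa using h i hi
  · exact lp.single_apply_ne p i 1 (ne_of_mem_of_not_mem hi hj).symm

theorem lpSupported_eq_bot_iff {S : Set ι} : lpSupported 𝕜 p S = ⊥ ↔ S = ∅ := by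
  classical
  refine ⟨fun h => Set.eq_empty_of_forall_notMem fun i hi => ?_, ?_⟩
  · have single_eq_zero := (Submodule.eq_bot_iff _).1 h _ (single_one_mem_lpSupported.2 hi)
    simpa using congr($single_eq_zero i)
  · rintro rfl
    exact (Submodule.eq_bot_iff _).2 fun x hx => lp.ext (funext fun i => hx i (Set.notMem_empty i))

theorem lpSupported_eq_top_iff {S : Set ι} : lpSupported 𝕜 p S = ⊤ ↔ S = Set.univ := by
  classical
  rw [Submodule.eq_top_iff', Set.eq_univ_iff_forall]
  exact ⟨fun h i => single_one_mem_lpSupported.1 (h (lp.single p i 1)),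
    fun h x i hi => absurd (h i) hi⟩

theorem IsSolidSubspace.single_one_mem [DecidableEq ι]
    {I : Submodule 𝕜 (lp (fun _ : ι => 𝕜) p)} (hI : IsSolidSubspace I)
    {x : lp (fun _ : ι => 𝕜) p} (hx : x ∈ I) {i : ι} (hi : x i ≠ 0) :
    lp.single p i 1 ∈ I := by
  refine hI _ ((x i)⁻¹ • x) (fun j => ?_) (I.smul_mem _ hx)
  obtain rfl | hj := eq_or_ne j i
  · simp [hi]
  · rw [lp.single_apply_ne p i 1 hj, norm_zero]
    exact norm_nonneg _

theorem mem_of_isClosed_of_single_one_mem [DecidableEq ι] [Fact (1 ≤ p)] (hp : p ≠ ∞)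
    {I : Submodule 𝕜 (lp (fun _ : ι => 𝕜) p)} (hI : IsClosed (I : Set (lp (fun _ : ι => 𝕜) p)))
    {x : lp (fun _ : ι => 𝕜) p} (hx : ∀ i, x i ≠ 0 → lp.single p i 1 ∈ I) : x ∈ I := by
  have single_mem (i : ι) : lp.single p i (x i) ∈ I := by
    by_cases hi : x i = 0
    · simp [hi]
    · simpa [← lp.single_smul] using I.smul_mem (x i) (hx i hi)
  exact hI.mem_of_tendsto (lp.hasSum_single hp x)
    (.of_forall fun s => I.sum_mem fun i _ => single_mem i)

theorem IsSolidSubspace.eq_lpSupported [DecidableEq ι] [Fact (1 ≤ p)] (hp : p ≠ ∞)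
    {I : Submodule 𝕜 (lp (fun _ : ι => 𝕜) p)} (hI : IsSolidSubspace I)
    (hclosed : IsClosed (I : Set (lp (fun _ : ι => 𝕜) p))) :
    I = lpSupported 𝕜 p {i | lp.single p i 1 ∈ I} := by
  refine le_antisymm (fun x hx i hi => ?_) (fun x hx => ?_)
  · exact by_contra fun hxi => hi (hI.single_one_mem hx hxi)
  · exact mem_of_isClosed_of_single_one_mem hp hclosed
      fun i hxi => by_contra fun hi => hxi (hx i hi)

end ClosedIdeal

section Operator

variable {ι 𝕜 : Type*} [NormedField 𝕜] {p : ℝ≥0∞} [Fact (1 ≤ p)]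

/-- `T` has a closed invariant solid subspace other than `{0}` and `ℓᵖ`. For `ι = ℕ` and `𝕜 = ℝ`
this is definitionally `HasNontrivialClosedInvariantIdeal`. -/
def HasNontrivialClosedInvariantSolidSubspace
    (T : lp (fun _ : ι => 𝕜) p →L[𝕜] lp (fun _ : ι => 𝕜) p) : Prop :=
  ∃ I : Submodule 𝕜 (lp (fun _ : ι => 𝕜) p),
    IsClosed (I : Set (lp (fun _ : ι => 𝕜) p)) ∧ I ≠ ⊥ ∧ I ≠ ⊤ ∧ IsSolidSubspace I ∧
    ∀ x ∈ I, T x ∈ I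

variable [DecidableEq ι]

/-- The matrix `a_{n,m} = (T e_m) n` of an operator on `ℓᵖ` with respect to the unit vectors. -/
def lpMatrix (T : lp (fun _ : ι => 𝕜) p →L[𝕜] lp (fun _ : ι => 𝕜) p) : Matrix ι ι 𝕜 :=
  .of fun n m => T (lp.single p m 1) n

theorem forall_mem_lpSupported_apply_mem_iff (hp : p ≠ ∞)
    (T : lp (fun _ : ι => 𝕜) p →L[𝕜] lp (fun _ : ι => 𝕜) p) (S : Set ι) :
    (∀ x ∈ lpSupported 𝕜 p S, T x ∈ lpSupported 𝕜 p S) ↔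
      ∀ m ∈ S, ∀ n ∉ S, lpMatrix T n m = 0 := by
  refine ⟨fun h m hm => h _ (single_one_mem_lpSupported.2 hm), fun h x hx => ?_⟩
  have closed_preimage : IsClosed
      ((lpSupported 𝕜 p S).comap T.toLinearMap : Set (lp (fun _ : ι => 𝕜) p)) :=
    (isClosed_lpSupported (𝕜 := 𝕜) (p := p) S).preimage T.continuous
  exact mem_of_isClosed_of_single_one_mem hp closed_preimage
    fun m hm => h m (by_contra fun hmS => hm (hx m hmS))

theorem hasNontrivialClosedInvariantSolidSubspace_iff_isReducibleMatrix (hp : p ≠ ∞)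
    (T : lp (fun _ : ι => 𝕜) p →L[𝕜] lp (fun _ : ι => 𝕜) p) :
    HasNontrivialClosedInvariantSolidSubspace T ↔ IsReducibleMatrix (lpMatrix T) := by
  constructor
  · rintro ⟨I, hclosed, hbot, htop, hsolid, hinv⟩
    obtain ⟨S, rfl⟩ : ∃ S, I = lpSupported 𝕜 p S := ⟨_, hsolid.eq_lpSupported hp hclosed⟩
    exact ⟨S, Set.nonempty_iff_ne_empty.2 (lpSupported_eq_bot_iff.not.1 hbot),
      lpSupported_eq_top_iff.not.1 htop, (forall_mem_lpSupported_apply_mem_iff hp T S).1 hinv⟩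
  · rintro ⟨S, hne, huniv, hS⟩
    exact ⟨lpSupported 𝕜 p S, isClosed_lpSupported S, lpSupported_eq_bot_iff.not.2 hne.ne_empty,
      lpSupported_eq_top_iff.not.2 huniv, isSolidSubspace_lpSupported S,
      (forall_mem_lpSupported_apply_mem_iff hp T S).2 hS⟩

end Operator

theorem IsPositiveOp.apply_e_nonneg {p : ℝ≥0∞} [Fact (1 ≤ p)]
    {T : lp (fun _ : ℕ => ℝ) p →L[ℝ] lp (fun _ : ℕ => ℝ) p} (hT : IsPositiveOp p T) (n m : ℕ) :
    0 ≤ T (e p m) n :=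
  hT (e p m) (Pi.single_nonneg.2 zero_le_one : (0 : ℕ → ℝ) ≤ Pi.single m 1) n

theorem stmt_11_general {𝕜 : Type*} [NormedField 𝕜] {p : ℝ≥0∞} [Fact (1 ≤ p)] (hp : p ≠ ∞)
    (T : lp (fun _ : ℕ => 𝕜) p →L[𝕜] lp (fun _ : ℕ => 𝕜) p)
    (hT : IsTridiagonalMatrix (lpMatrix T)) :
    ¬ HasNontrivialClosedInvariantSolidSubspace T ↔
      (∀ n, lpMatrix T (n + 1) n ≠ 0) ∧ ∀ n, lpMatrix T n (n + 1) ≠ 0 := by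
  rw [hasNontrivialClosedInvariantSolidSubspace_iff_isReducibleMatrix hp,
    hT.not_isReducibleMatrix_iff]

/-- A positive tridiagonal operator on `ℓᵖ` (`1 ≤ p < ∞`) has no non-trivial
closed invariant ideal if and only if both the sub-diagonal and the
super-diagonal of its matrix have no null elements. -/
theorem stmt_11 (p : ℝ≥0∞) [Fact (1 ≤ p)] (hp : p ≠ ∞)
    (T : lp (fun _ : ℕ => ℝ) p →L[ℝ] lp (fun _ : ℕ => ℝ) p)
    (hTpos : IsPositiveOp p T) (htri : IsTridiagonal p T) :
    ¬ HasNontrivialClosedInvariantIdeal p T ↔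
      (∀ n : ℕ, 0 < (T (e p n)) (n + 1)) ∧
      (∀ n : ℕ, 0 < (T (e p (n + 1))) n) := by
  simp only [(hTpos.apply_e_nonneg _ _).lt_iff_ne']
  exact stmt_11_general hp T htri
end
end
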